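/- Let p_i = Σ_{F ⊆ [n], |F| = i} Π_{j∈F} x_j (the i-th elementary symmetric polynomial) in S = K[x_1,...,x_n] and J = (p_1,...,p_n). Then with respect to the reverse lexicographic order, the initial ideal of J is in_<(J) = (x_1, x_2^2, ..., x_n^n). -/

import Mathlib

/-- Total degree of an exponent vector. -/
def expDeg {n : ℕ} (m : Fin n →₀ ℕ) : ℕ := m.sum fun _ e => e

/-- The (degree-)reverse lexicographic order on exponent vectors, with
`x₁ > x₂ > ⋯ > xₙ`: `u < v` iff `deg u < deg v`, or the degrees agree and at the last
index where they differ `u` has the larger exponent. -/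
def revlexLT {n : ℕ} (u v : Fin n →₀ ℕ) : Prop :=
  expDeg u < expDeg v ∨
    (expDeg u = expDeg v ∧ ∃ i : Fin n, v i < u i ∧ ∀ j : Fin n, i < j → u j = v j)

/-- The initial ideal of `J` with respect to the reverse lexicographic order: generated
by the leading monomials of the nonzero elements of `J`. -/
noncomputable def initialIdealRevlex {n : ℕ} {K : Type*} [Field K]
    (J : Ideal (MvPolynomial (Fin n) K)) : Ideal (MvPolynomial (Fin n) K) :=
  Ideal.span {q | ∃ p ∈ J, ∃ m ∈ p.support,
    (∀ m' ∈ p.support, m' ≠ m → revlexLT m' m) ∧ q = MvPolynomial.monomial m (1 : K)}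

universe u

open Finset in
lemma prod_one_sub_eq_one {n : ℕ} {B : Type*} [CommRing B] (b : Fin n → B)
    (hb : ∀ i : Fin n, ∑ t ∈ powersetCard ((i : ℕ) + 1) univ, ∏ j ∈ t, b j = 0) :
    ∏ j : Fin n, (1 - PowerSeries.C (b j) * PowerSeries.X) = 1 := by
  simp only [sub_eq_add_neg]
  rw [prod_one_add, sum_powerset, sum_range_succ']
  simp only [powersetCard_zero, sum_singleton, prod_empty]
  rw [add_eq_right]
  refine sum_eq_zero fun k hk => ?_
  simp only [card_univ, Fintype.card_fin, mem_range] at hk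
  have h := hb ⟨k, hk⟩
  simp only at h
  have : ∀ t ∈ powersetCard (k + 1) (univ : Finset (Fin n)),
      ∏ j ∈ t, -(PowerSeries.C (b j) * PowerSeries.X) =
      PowerSeries.C (∏ j ∈ t, b j) * (-PowerSeries.X) ^ (k + 1) := by
    intro t ht
    rw [mem_powersetCard] at ht
    simp only [← mul_neg]
    rw [prod_mul_distrib, prod_const, ht.2, map_prod]
  rw [sum_congr rfl this, ← sum_mul, ← map_sum, h]
  simp

open Finset in
lemma coeff_complete_eq_zero {n : ℕ} {B : Type*} [CommRing B] (b : Fin n → B)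
    (hb : ∀ i : Fin n, ∑ t ∈ powersetCard ((i : ℕ) + 1) univ, ∏ j ∈ t, b j = 0) (i : Fin n) :
    ∑ l ∈ finsuppAntidiag (Ici i) ((i : ℕ) + 1), ∏ j ∈ Ici i, b j ^ l j = 0 := by
  have h1 := prod_one_sub_eq_one b hb
  have hgeo : ∀ j, (1 - PowerSeries.C (b j) * PowerSeries.X) *
      PowerSeries.mk (fun k => b j ^ k) = 1 := by
    intro j
    ext k
    rw [sub_mul, one_mul, mul_assoc, map_sub, PowerSeries.coeff_C_mul]
    cases k with
    | zero => simp
    | succ k => simp [PowerSeries.coeff_succ_X_mul, PowerSeries.coeff_one, pow_succ']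
  have h2 : ∏ j ∈ Ici i, PowerSeries.mk (fun k => b j ^ k) =
      ∏ j ∈ Iio i, (1 - PowerSeries.C (b j) * PowerSeries.X) := by
    have h3 : (∏ j ∈ Ici i, (1 - PowerSeries.C (b j) * PowerSeries.X)) *
        ∏ j ∈ Ici i, PowerSeries.mk (fun k => b j ^ k) = 1 := by
      rw [← prod_mul_distrib]
      exact prod_eq_one fun j _ => hgeo j
    have h4 : (∏ j ∈ Iio i, (1 - PowerSeries.C (b j) * PowerSeries.X)) *
        ∏ j ∈ Ici i, (1 - PowerSeries.C (b j) * PowerSeries.X) = 1 := by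
      rw [← prod_union]
      · refine Eq.trans ?_ h1
        congr 1
        ext j
        simp [lt_or_ge]
      · rw [disjoint_left]
        intro j
        simp
    calc _ = ((∏ j ∈ Iio i, (1 - PowerSeries.C (b j) * PowerSeries.X)) *
        ∏ j ∈ Ici i, (1 - PowerSeries.C (b j) * PowerSeries.X)) * 
          ∏ j ∈ Ici i, PowerSeries.mk (fun k => b j ^ k) := by rw [h4, one_mul]
      _ = _ := by rw [mul_assoc, h3, mul_one]
  have h5 := congrArg (PowerSeries.coeff ((i : ℕ) + 1)) h2
  rw [PowerSeries.coeff_prod] at h5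
  simp only [PowerSeries.coeff_mk] at h5
  rw [h5]
  have h6 : (∏ j ∈ Iio i, (1 - PowerSeries.C (b j) * PowerSeries.X)) =
      ((∏ j ∈ Iio i, (1 - Polynomial.C (b j) * Polynomial.X) : Polynomial B) : PowerSeries B) := by
    rw [← Polynomial.coeToPowerSeries.ringHom_apply, map_prod]
    simp
  rw [h6, Polynomial.coeff_coe]
  apply Polynomial.coeff_eq_zero_of_natDegree_lt
  refine lt_of_le_of_lt (Polynomial.natDegree_prod_le _ _) ?_
  refine lt_of_le_of_lt (sum_le_card_nsmul _ _ 1 fun j _ => ?_) ?_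
  · compute_degree
  · simp

open Polynomial in
lemma exists_splitting (n : ℕ) : ∀ (R : Type u) [CommRing R] (f : R[X]), f.Monic → f.natDegree = n →
    ∃ (A : Type u) (_ : CommRing A) (_ : Algebra R A) (y : Fin n → A),
      ∏ i, (X - C (y i)) = f.map (algebraMap R A) ∧
      LinearIndependent R (fun v : {v : Fin n → ℕ // ∀ i, v i ≤ i} => ∏ i, y i ^ v.1 i) := by
  induction n with
  | zero =>
    intro R _ f hf hn
    refine ⟨R, inferInstance, inferInstance, Fin.elim0, ?_, ?_⟩
    · rw [hf.natDegree_eq_zero.1 hn]; simp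
    · rcases subsingleton_or_nontrivial R with h | h
      · exact linearIndependent_of_subsingleton
      · have : Unique {v : Fin 0 → ℕ // ∀ i, v i ≤ i} := 
          ⟨⟨⟨fun i => i.elim0, fun i => i.elim0⟩⟩, fun a => Subsingleton.elim _ _⟩
        convert (Module.Basis.singleton {v : Fin 0 → ℕ // ∀ i, v i ≤ i} R).linearIndependent using 1
        · ext v
          simp
        · rfl
  | succ n ih =>
    intro R _ f hf hn
    have hRn : Nontrivial R := by
      by_contra h
      rw [not_nontrivial_iff_subsingleton] at h
      rw [Subsingleton.elim f 0] at hn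
      simp at hn
    let pb := AdjoinRoot.powerBasis' hf
    have hSn : Nontrivial (AdjoinRoot f) := by
      have h0 : 0 < pb.dim := by simp [pb, hn]
      exact ⟨⟨_, 0, pb.basis.ne_zero ⟨0, h0⟩⟩⟩
    let r := AdjoinRoot.root f
    let g : (AdjoinRoot f)[X] := f.map (AdjoinRoot.of f)
    have hroot : IsRoot g r := AdjoinRoot.isRoot_root f
    have hg : (X - C r) * (g /ₘ (X - C r)) = g := mul_divByMonic_eq_iff_isRoot.2 hroot
    have hgm : g.Monic := hf.map _
    have hgd : g.natDegree = n + 1 := by rw [← hn]; exact hf.natDegree_map _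
    have hqm : (g /ₘ (X - C r)).Monic := by
      refine Monic.of_mul_monic_left (monic_X_sub_C r) ?_
      rw [hg]; exact hgm
    have hqd : (g /ₘ (X - C r)).natDegree = n := by
      rw [natDegree_divByMonic _ (monic_X_sub_C r), hgd]; simp
    obtain ⟨A, iA, iB, y, hy, hli⟩ := ih (AdjoinRoot f) _ hqm hqd
    let iR : Algebra R A := ((algebraMap (AdjoinRoot f) A).comp (algebraMap R (AdjoinRoot f))).toAlgebra
    have tower : IsScalarTower R (AdjoinRoot f) A := IsScalarTower.of_algebraMap_eq fun x => rfl
    refine ⟨A, iA, iR, Fin.snoc y (algebraMap _ A r), ?_, ?_⟩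
    · rw [Fin.prod_univ_castSucc]
      simp only [Fin.snoc_castSucc, Fin.snoc_last]
      rw [hy]
      have := congrArg (Polynomial.map (algebraMap (AdjoinRoot f) A)) hg
      rw [Polynomial.map_mul, mul_comm] at this
      simp only [Polynomial.map_sub, map_X, map_C] at this
      rw [this, Polynomial.map_map]
      rfl
    · have h1 := linearIndependent_smul pb.basis.linearIndependent hli
      have hdim : pb.dim = n + 1 := by simp [pb, hn]
      let e : {v : Fin (n+1) → ℕ // ∀ i, v i ≤ i} → Fin pb.dim × {v : Fin n → ℕ // ∀ i, v i ≤ i} :=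
        fun v => (⟨v.1 (Fin.last n), by
          have := v.2 (Fin.last n); simp at this; omega⟩,
          ⟨fun i => v.1 i.castSucc, fun i => by simpa using v.2 i.castSucc⟩)
      have he : Function.Injective e := by
        intro v w h
        simp only [e, Prod.mk.injEq, Fin.mk.injEq, Subtype.mk.injEq] at h
        ext i
        refine Fin.lastCases h.1 (fun j => congrFun h.2 j) i
      have h2 := h1.comp e he
      convert h2 using 1
      ext v
      rw [Fin.prod_univ_castSucc]
      simp only [Fin.snoc_castSucc, Fin.snoc_last, Function.comp, e, Algebra.smul_def, PowerBasis.coe_basis]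
      rw [mul_comm, map_pow]
      rfl

lemma expDeg_eq {n : ℕ} (u : Fin n →₀ ℕ) : expDeg u = ∑ i, u i := by
  unfold expDeg
  exact Finsupp.sum_fintype _ _ (by simp)

lemma expDeg_add {n : ℕ} (u w : Fin n →₀ ℕ) : expDeg (u + w) = expDeg u + expDeg w := by
  simp [expDeg_eq, Finset.sum_add_distrib]

lemma revlexLT_irrefl {n : ℕ} (u : Fin n →₀ ℕ) : ¬ revlexLT u u := by
  rintro (h | ⟨_, i, h, _⟩) <;> exact lt_irrefl _ h

lemma revlexLT_trans {n : ℕ} {u v w : Fin n →₀ ℕ} (h1 : revlexLT u v) (h2 : revlexLT v w) :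
    revlexLT u w := by
  rcases h1 with h1 | ⟨h1, i, hi, hi'⟩
  · rcases h2 with h2 | ⟨h2, _⟩
    · exact Or.inl (h1.trans h2)
    · exact Or.inl (h2 ▸ h1)
  · rcases h2 with h2 | ⟨h2, j, hj, hj'⟩
    · exact Or.inl (h1 ▸ h2)
    · refine Or.inr ⟨h1.trans h2, max i j, ?_, fun k hk => ?_⟩
      · rcases lt_trichotomy i j with h | h | h
        · rw [max_eq_right h.le, hi' j h]; exact hj
        · subst h; rw [max_self]; exact hj.trans hi
        · rw [max_eq_left h.le, ← hj' i h]; exact hi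
      · rw [hi' k (lt_of_le_of_lt (le_max_left _ _) hk), hj' k (lt_of_le_of_lt (le_max_right _ _) hk)]

lemma revlexLT_add {n : ℕ} {u v : Fin n →₀ ℕ} (w : Fin n →₀ ℕ) (h : revlexLT u v) :
    revlexLT (w + u) (w + v) := by
  rcases h with h | ⟨h, i, hi, hi'⟩
  · left; rw [expDeg_add, expDeg_add]; omega
  · right
    refine ⟨by rw [expDeg_add, expDeg_add, h], i, by simpa using hi, fun j hj => ?_⟩
    simp [hi' j hj]

lemma finite_lower {n : ℕ} (u : Fin n →₀ ℕ) : {w | revlexLT w u}.Finite := by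
  refine (Set.finite_Iic (Finsupp.equivFunOnFinite.symm fun _ => expDeg u)).subset ?_
  intro w hw i
  have h1 : expDeg w ≤ expDeg u := by
    rcases hw with h | ⟨h, _⟩
    · exact h.le
    · exact h.le
  have h2 : w i ≤ expDeg w := by
    rw [expDeg_eq]
    exact Finset.single_le_sum (f := fun i => w i) (fun _ _ => Nat.zero_le _) (Finset.mem_univ i)
  exact h2.trans h1

lemma revlex_induction {n : ℕ} {P : (Fin n →₀ ℕ) → Prop}
    (h : ∀ u, (∀ w, revlexLT w u → P w) → P u) (u : Fin n →₀ ℕ) : P u := by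
  suffices H : ∀ (N : ℕ) u, {w | revlexLT w u}.ncard = N → P u from H _ u rfl
  intro N
  induction N using Nat.strong_induction_on with
  | _ N ih =>
    intro u hu
    refine h u fun w hw => ih _ ?_ w rfl
    rw [← hu]
    refine Set.ncard_lt_ncard ⟨fun x hx => revlexLT_trans hx hw, fun hs => ?_⟩ (finite_lower u)
    exact revlexLT_irrefl w (hs hw)

lemma lower_of_antidiag {n : ℕ} {i : Fin n} {l : Fin n →₀ ℕ}
    (hl : l ∈ Finset.finsuppAntidiag (Finset.Ici i) ((i : ℕ) + 1))
    (hne : l ≠ Finsupp.single i ((i : ℕ) + 1)) :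
    revlexLT l (Finsupp.single i ((i : ℕ) + 1)) := by
  have hd : expDeg l = (i : ℕ) + 1 := by
    rw [Finset.mem_finsuppAntidiag'] at hl
    exact hl.1
  rw [Finset.mem_finsuppAntidiag] at hl
  have hd' : expDeg (Finsupp.single i ((i : ℕ) + 1)) = (i : ℕ) + 1 := by
    exact Finsupp.sum_single_index rfl
  refine Or.inr ⟨hd.trans hd'.symm, ?_⟩
  have hnz : l.support.Nonempty := by
    rw [Finsupp.support_nonempty_iff]
    rintro rfl
    simp [expDeg] at hd
  set k := l.support.max' hnz with hk
  have hks : k ∈ l.support := Finset.max'_mem _ _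
  have hik : i ≤ k := by simpa using hl.2 hks
  have hgt : ∀ j, k < j → l j = 0 := by
    intro j hj
    by_contra hc
    exact absurd (Finset.le_max' l.support j (by simpa using hc)) (not_le.2 hj)
  have hlt : i < k := by
    refine lt_of_le_of_ne hik fun he => hne ?_
    have hsub : l.support ⊆ {i} := by
      intro j hj
      rw [Finset.mem_singleton]
      refine le_antisymm ?_ (by simpa using hl.2 hj)
      rw [he]; exact Finset.le_max' _ _ hj
    rw [Finsupp.support_subset_singleton] at hsub
    have : l i = (i : ℕ) + 1 := by
      rw [hsub] at hd; simpa [expDeg] using hd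
    rw [hsub, this]
  refine ⟨k, ?_, fun j hj => ?_⟩
  · rw [Finsupp.single_eq_of_ne hlt.ne']
    exact Nat.pos_of_ne_zero (by simpa using hks)
  · rw [hgt j hj, Finsupp.single_eq_of_ne (hlt.trans hj).ne']

/-- The ideal generated by the elementary symmetric polynomials of positive degree. -/
noncomputable def esymmIdeal (n : ℕ) (K : Type*) [Field K] : Ideal (MvPolynomial (Fin n) K) :=
  Ideal.span (Set.range fun i : Fin n => MvPolynomial.esymm (Fin n) K ((i : ℕ) + 1))

open MvPolynomial in
lemma complete_mem (n : ℕ) (K : Type*) [Field K] (i : Fin n) :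
    ∑ l ∈ Finset.finsuppAntidiag (Finset.Ici i) ((i : ℕ) + 1), monomial l (1 : K) ∈
      esymmIdeal n K := by
  have h := coeff_complete_eq_zero (fun j => Ideal.Quotient.mk (esymmIdeal n K) (X j))
    (fun k => by
      have hk : esymm (Fin n) K ((k : ℕ) + 1) ∈ esymmIdeal n K := Ideal.subset_span ⟨k, rfl⟩
      rw [← Ideal.Quotient.eq_zero_iff_mem, esymm, map_sum] at hk
      simpa only [map_prod] using hk) i
  rw [← Ideal.Quotient.eq_zero_iff_mem, ← h, map_sum]
  refine Finset.sum_congr rfl fun l hl => ?_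
  rw [Finset.mem_finsuppAntidiag] at hl
  rw [monomial_eq, C_1, one_mul, Finsupp.prod_of_support_subset _ hl.2 _ (by simp), map_prod]
  simp

open MvPolynomial in
lemma mem_sup_span_of_subset {n : ℕ} {K : Type*} [Field K]
    {N : Submodule K (MvPolynomial (Fin n) K)} {s t : Set (Fin n →₀ ℕ)} (hst : s ⊆ t)
    {p : MvPolynomial (Fin n) K}
    (hp : p ∈ N ⊔ Submodule.span K ((fun v => monomial v (1 : K)) '' s)) :
    p ∈ N ⊔ Submodule.span K ((fun v => monomial v (1 : K)) '' t) :=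
  (sup_le_sup_left (Submodule.span_mono (Set.image_mono hst)) N :
    N ⊔ Submodule.span K ((fun v => monomial v (1 : K)) '' s) ≤ _) hp

open MvPolynomial in
lemma reduction (n : ℕ) (K : Type*) [Field K] (u : Fin n →₀ ℕ) :
    monomial u (1 : K) ∈ (esymmIdeal n K).restrictScalars K ⊔
      Submodule.span K ((fun v => monomial v (1 : K)) ''
        {v : Fin n →₀ ℕ | (∀ i, v i ≤ i) ∧ (v = u ∨ revlexLT v u)}) := by
  induction u using revlex_induction with
  | h u ih =>
    by_cases hu : ∀ i, u i ≤ i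
    · exact Submodule.mem_sup_right (Submodule.subset_span ⟨u, ⟨hu, Or.inl rfl⟩, rfl⟩)
    · push Not at hu
      obtain ⟨i, hi⟩ := hu
      obtain ⟨w, hw⟩ : ∃ w, u = w + Finsupp.single i ((i : ℕ) + 1) := by
        refine ⟨u - Finsupp.single i ((i : ℕ) + 1), ?_⟩
        rw [tsub_add_cancel_of_le]
        rwa [Finsupp.single_le_iff]
      have hmem := Ideal.mul_mem_left _ (monomial w (1 : K)) (complete_mem n K i)
      have hin : Finsupp.single i ((i : ℕ) + 1) ∈
          Finset.finsuppAntidiag (Finset.Ici i) ((i : ℕ) + 1) := by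
        rw [Finset.mem_finsuppAntidiag']
        refine ⟨Finsupp.sum_single_index rfl, Finsupp.support_single_subset.trans (by simp)⟩
      rw [← Finset.add_sum_erase _ _ hin, mul_add, monomial_mul, ← hw, mul_one,
        Finset.mul_sum] at hmem
      have key := sub_mem (S := Submodule K (MvPolynomial (Fin n) K))
        (H := (esymmIdeal n K).restrictScalars K ⊔
          Submodule.span K ((fun v => monomial v (1 : K)) ''
          {v : Fin n →₀ ℕ | (∀ i, v i ≤ i) ∧ (v = u ∨ revlexLT v u)}))
        (Submodule.mem_sup_left hmem) (Submodule.sum_mem _ (t := (Finset.finsuppAntidiag (Finset.Ici i) ((i : ℕ) + 1)).erase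
          (Finsupp.single i ((i : ℕ) + 1)))
          (f := fun l => monomial w (1 : K) * monomial l 1) (fun l hl => by
          rw [Finset.mem_erase] at hl
          rw [monomial_mul, mul_one]
          have hlt : revlexLT (w + l) u := by
            rw [hw]; exact revlexLT_add w (lower_of_antidiag hl.2 hl.1)
          refine mem_sup_span_of_subset ?_ (ih _ hlt)
          rintro v ⟨hv1, hv2⟩
          refine ⟨hv1, Or.inr ?_⟩
          rcases hv2 with rfl | hv2
          · exact hlt
          · exact revlexLT_trans hv2 hlt))
      rwa [add_sub_cancel_right] at key

open MvPolynomial in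
lemma standard_indep (n : ℕ) (K : Type*) [Field K] (m : Fin n →₀ ℕ) (hm : ∀ i, m i ≤ i) :
    monomial m (1 : K) ∉ (esymmIdeal n K).restrictScalars K ⊔
      Submodule.span K ((fun v => monomial v (1 : K)) ''
        {v : Fin n →₀ ℕ | (∀ i, v i ≤ i) ∧ v ≠ m}) := by
  intro h
  obtain ⟨A, iA, iK, y, hy, hli⟩ := exists_splitting n K (Polynomial.X ^ n)
    (Polynomial.monic_X_pow n) (by simp)
  have hJ : ∀ p ∈ esymmIdeal n K, aeval y p = 0 := by
    have : esymmIdeal n K ≤ RingHom.ker (aeval (R := K) y) := by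
      refine Ideal.span_le.2 ?_
      rintro _ ⟨i, rfl⟩
      rw [SetLike.mem_coe, RingHom.mem_ker]
      simp only
      rw [aeval_esymm_eq_multiset_esymm]
      have h1 := Multiset.prod_X_sub_C_coeff (Finset.univ.val.map y) (k := n - (i + 1)) (by simp)
      have h2 : ((Finset.univ.val.map y).map fun t => Polynomial.X - Polynomial.C t).prod =
          ∏ i, (Polynomial.X - Polynomial.C (y i)) := by
        rw [Multiset.map_map]; rfl
      rw [h2, hy] at h1
      have h3 : n - (n - ((i : ℕ) + 1)) = i + 1 := by omega
      have h4 : n - ((i : ℕ) + 1) ≠ n := by omega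
      simp only [Polynomial.map_pow, Polynomial.map_X, Polynomial.coeff_X_pow, h4, if_false,
        Multiset.card_map, Finset.card_val, Finset.card_univ, Fintype.card_fin, h3] at h1
      have h5 := congrArg (fun x => (-1) ^ ((i : ℕ) + 1) * x) h1
      simp only [mul_zero, ← mul_assoc, ← mul_pow] at h5
      simpa using h5.symm
    exact fun p hp => this hp
  obtain ⟨p, hp, q, hq, hpq⟩ := Submodule.mem_sup.1 h
  have hmon : ∀ v : Fin n →₀ ℕ, aeval y (monomial v (1 : K)) = ∏ i, y i ^ v i := by
    intro v
    rw [aeval_monomial, map_one, one_mul, Finsupp.prod_fintype _ _ (by simp)]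
  have h1 : aeval y q = ∏ i, y i ^ m i := by
    rw [← hmon, ← hpq, map_add, hJ p hp, zero_add]
  have h2 : aeval y q ∈ Submodule.span K
      ((fun v : {v : Fin n → ℕ // ∀ i, v i ≤ i} => ∏ i, y i ^ v.1 i) ''
        (Set.univ \ {⟨m, hm⟩})) := by
    have h3 := Submodule.mem_map_of_mem (f := (aeval (R := K) y).toLinearMap) hq
    rw [Submodule.map_span] at h3
    refine Submodule.span_mono ?_ h3
    rintro _ ⟨_, ⟨v, ⟨hv1, hv2⟩, rfl⟩, rfl⟩
    refine ⟨⟨v, hv1⟩, ⟨trivial, ?_⟩, (hmon v).symm⟩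
    intro hc
    apply hv2
    simp only [Set.mem_singleton_iff, Subtype.mk.injEq] at hc
    exact DFunLike.coe_injective hc
  rw [h1] at h2
  exact linearIndependent_iff_notMem_span.1 hli ⟨m, hm⟩ h2

open MvPolynomial in
/-- Let `p_i` be the `i`-th elementary symmetric polynomial in
`S = K[x₁,…,xₙ]` and `J = (p₁,…,pₙ)`.  With respect to the reverse lexicographic order,
`in(J) = (x₁, x₂², …, xₙⁿ)`. -/
theorem initialIdeal_esymm (n : ℕ) (K : Type*) [Field K] :
    initialIdealRevlex (Ideal.span (Set.range fun i : Fin n =>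
        MvPolynomial.esymm (Fin n) K ((i : ℕ) + 1))) =
      Ideal.span (Set.range fun i : Fin n =>
        (MvPolynomial.X i : MvPolynomial (Fin n) K) ^ ((i : ℕ) + 1)) := by
  apply le_antisymm
  · refine Ideal.span_le.2 ?_
    rintro _ ⟨p, hp, m, hm, hlt, rfl⟩
    rw [SetLike.mem_coe]
    by_cases hs : ∀ i, m i ≤ i
    · exfalso
      refine standard_indep n K m hs ?_
      set M := (esymmIdeal n K).restrictScalars K ⊔
        Submodule.span K ((fun v => monomial v (1 : K)) ''
          {v : Fin n →₀ ℕ | (∀ i, v i ≤ i) ∧ v ≠ m}) with hM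
      have hpM : p ∈ M := Submodule.mem_sup_left hp
      have hsum : p = monomial m (coeff m p) +
          ∑ v ∈ p.support.erase m, monomial v (coeff v p) := by
        rw [Finset.add_sum_erase _ (fun v => monomial v (coeff v p)) hm]
        exact (support_sum_monomial_coeff p).symm
      have hrest : ∑ v ∈ p.support.erase m, monomial v (coeff v p) ∈ M := by
        refine Submodule.sum_mem _ fun v hv => ?_
        rw [Finset.mem_erase] at hv
        have hvm := hlt v hv.2 hv.1
        have : monomial v (coeff v p) = coeff v p • monomial v (1 : K) := by
          rw [smul_monomial, smul_eq_mul, mul_one]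
        rw [this]
        refine Submodule.smul_mem _ _ ?_
        refine mem_sup_span_of_subset ?_ (reduction n K v)
        rintro w ⟨hw1, hw2⟩
        refine ⟨hw1, ?_⟩
        rintro rfl
        rcases hw2 with h | h
        · exact hv.1 h.symm
        · exact revlexLT_irrefl _ (revlexLT_trans h hvm)
      have hlead : monomial m (coeff m p) ∈ M := by
        have := sub_mem hpM hrest
        rwa [sub_eq_of_eq_add hsum] at this
      have h2 := Submodule.smul_mem M (coeff m p)⁻¹ hlead
      rwa [smul_monomial, smul_eq_mul, inv_mul_cancel₀ (mem_support_iff.1 hm)] at h2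
    · push Not at hs
      obtain ⟨i, hi⟩ := hs
      have : m = (m - Finsupp.single i ((i : ℕ) + 1)) + Finsupp.single i ((i : ℕ) + 1) := by
        rw [tsub_add_cancel_of_le]
        rwa [Finsupp.single_le_iff]
      rw [this, ← mul_one (1 : K), ← monomial_mul, ← X_pow_eq_monomial]
      exact Ideal.mul_mem_left _ _ (Ideal.subset_span ⟨i, rfl⟩)
  · refine Ideal.span_le.2 ?_
    rintro _ ⟨i, rfl⟩
    refine Ideal.subset_span ⟨_, complete_mem n K i, Finsupp.single i ((i : ℕ) + 1), ?_, ?_,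
      X_pow_eq_monomial⟩
    · rw [mem_support_iff, coeff_sum]
      simp only [coeff_monomial]
      rw [Finset.sum_ite_eq_of_mem']
      · exact one_ne_zero
      · rw [Finset.mem_finsuppAntidiag']
        exact ⟨Finsupp.sum_single_index rfl, Finsupp.support_single_subset.trans (by simp)⟩
    · intro l hl hne
      refine lower_of_antidiag ?_ hne
      by_contra hc
      rw [mem_support_iff, coeff_sum] at hl
      simp only [coeff_monomial] at hl
      rw [Finset.sum_ite_eq', if_neg hc] at hl
      exact hl rfl
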